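/- Fix N ≥ 1, intrinsic frequencies ω_1,…,ω_N ∈ ℝ, and κ > (πe/2)^{3/2}·‖Ω‖_∞ with κ > 0. Then the m-measure of the set of initial data (θ_1^0,…,θ_N^0) ∈ [−π,π]^N whose solution of the prototypical Winfree model satisfies sup_{t≥0} θ_i(t) − inf_{t≥0} θ_i(t) < 2π for every i = 1,…,N is at least 1 − (√(πe/2) · (‖Ω‖_∞/κ)^{1/3})^N. -/

import Mathlib

/-!
Write `ε = ‖Ω‖_∞ / κ`, and let `R` be the order parameter. The theorem splits into a deterministic
and a volume estimate, matched at the threshold `R(0) = 2 ε^(2/3)`.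

*Dynamics.* If `R(0) > 2 ε^(2/3)`, every phase oscillates by less than `2π`. Put `μ = R(0) / 2`, so
that `ε² < μ³`. While `R ≥ μ`, the quantity `x = 1 + cos θᵢ` can decrease only where
`|sin θᵢ| ≤ ε / μ`, i.e. for `x` close to `0` or to `2`; hence `x` never drops by more than any
`δ > ε² / μ²` below its initial value (`one_add_cos_ge`). As `ε² / μ² < μ`, averaging gives
`R ≥ 2μ - δ > μ`, and a continuity argument yields `R > μ > ε` for all time (`orderParam_gt`).
Then `θᵢ' < 0` where `sin θᵢ = 1` and `θᵢ' > 0` where `sin θᵢ = -1`, so `θᵢ` can cross these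
points in one direction only (`oscLt2Pi_of_trap`).

*Volume.* The set `∑ (1 + cos θⱼ) ≤ r N` in the box is estimated by a Chernoff bound with the weight
`∏ exp (1/2 - (1 + cos θⱼ) / (2 r))`; comparison with a Gaussian bounds its normalized volume by
`√(π e r / 4) ^ N` (`volume_small_order_le`), which at `r = 2 ε^(2/3)` is the error term
of the theorem.
-/

open MeasureTheory Filter

/-- The order parameter `R(t) = (1/N) ∑ⱼ (1 + cos θⱼ(t))` of the prototypical Winfree model. -/
noncomputable def orderParam (N : ℕ) (θ : Fin N → ℝ → ℝ) (t : ℝ) : ℝ :=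
  (N : ℝ)⁻¹ * ∑ j, (1 + Real.cos (θ j t))

/-- `θ` is the solution of the prototypical Winfree model with frequencies `ω`,
coupling strength `κ` and initial data `θ0`. -/
def IsWinfreeSol (N : ℕ) (ω : Fin N → ℝ) (κ : ℝ) (θ0 : Fin N → ℝ)
    (θ : Fin N → ℝ → ℝ) : Prop :=
  (∀ i, θ i 0 = θ0 i) ∧
  ∀ i, ∀ t : ℝ, 0 ≤ t →
    HasDerivAt (θ i)
      (ω i - κ / (N : ℝ) * (∑ j, (1 + Real.cos (θ j t))) * Real.sin (θ i t)) t

/-- `sup_{t ≥ 0} f(t) - inf_{t ≥ 0} f(t) < 2π` (in particular `f` is bounded on `[0,∞)`). -/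
def OscLt2Pi (f : ℝ → ℝ) : Prop :=
  BddAbove (f '' Set.Ici 0) ∧ BddBelow (f '' Set.Ici 0) ∧
    sSup (f '' Set.Ici 0) - sInf (f '' Set.Ici 0) < 2 * Real.pi

/-- The normalized Lebesgue measure on the box `[-π, π]^N`. -/
noncomputable def normBox (N : ℕ) : Measure (Fin N → ℝ) :=
  (ENNReal.ofReal ((2 * Real.pi) ^ N))⁻¹ •
    (volume.restrict (Set.univ.pi fun _ : Fin N => Set.Icc (-Real.pi) Real.pi))

/-! ### Global existence -/

open Set in
/-- A bounded, globally Lipschitz autonomous vector field on a Banach space has a global integral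
curve through every point: since the field is bounded by `L`, Picard–Lindelöf on the ball of radius
`L * T` gives a solution on all of `(-T, T)`, and these solutions agree by uniqueness. -/
theorem exists_global_solution {E : Type*} [NormedAddCommGroup E] [NormedSpace ℝ E]
    [CompleteSpace E] {v : E → E} {K L : NNReal} (hK : LipschitzWith K v)
    (hL : ∀ x, ‖v x‖ ≤ L) (x₀ : E) :
    ∃ γ : ℝ → E, γ 0 = x₀ ∧ ∀ t, HasDerivAt γ (v (γ t)) t := by
  have key : ∀ T : NNReal, ∃ γ : ℝ → E, γ 0 = x₀ ∧
      ∀ t ∈ Ioo (-(T : ℝ)) T, HasDerivAt γ (v (γ t)) t := by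
    intro T
    have hpl : IsPicardLindelof (fun _ => v) (tmin := -(T : ℝ)) (tmax := T)
        ⟨0, by simp, by simp⟩ x₀ (L * T) 0 L K :=
      { lipschitzOnWith := fun _ _ => hK.lipschitzOnWith
        continuousOn := fun _ _ => continuousOn_const
        norm_le := fun _ _ x _ => hL x
        mul_max_le := by simp }
    obtain ⟨γ, h0, hγ⟩ := hpl.exists_eq_forall_mem_Icc_hasDerivWithinAt₀
    exact ⟨γ, h0, fun t ht => (hγ t (Ioo_subset_Icc_self ht)).hasDerivAt (Icc_mem_nhds ht.1 ht.2)⟩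
  choose γ h0 hγ using key
  have agree : ∀ S T : NNReal, S ≤ T → ∀ t ∈ Ioo (-(S : ℝ)) S, γ S t = γ T t := by
    intro S T hST t ht
    have hS : (0 : ℝ) ∈ Ioo (-(S : ℝ)) S := by
      have : (0 : ℝ) < S := by linarith [ht.1, ht.2]
      exact ⟨by linarith, this⟩
    have hST' : (S : ℝ) ≤ T := hST
    exact ODE_solution_unique_of_mem_Ioo (v := fun _ => v) (s := fun _ => univ)
      (fun _ _ => hK.lipschitzOnWith) hS (fun u hu => ⟨hγ S u hu, trivial⟩)
      (fun u hu => ⟨hγ T u ⟨by linarith [hu.1], by linarith [hu.2]⟩, trivial⟩)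
      ((h0 S).trans (h0 T).symm) ht
  refine ⟨fun t => γ (‖t‖₊ + 1) t, h0 _, fun t => ?_⟩
  have hval : ∀ᶠ s in nhds t, γ (‖s‖₊ + 1) s = γ (‖t‖₊ + 2) s := by
    filter_upwards [Metric.ball_mem_nhds t one_pos] with s hs
    rw [Metric.mem_ball, Real.dist_eq] at hs
    have h1 : |s| ≤ |t| + 1 := by
      have := abs_sub_abs_le_abs_sub s t
      linarith
    refine agree _ _ ?_ s ?_
    · rw [← NNReal.coe_le_coe]
      push_cast
      simp only [Real.norm_eq_abs]
      linarith
    · push_cast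
      simp only [Real.norm_eq_abs]
      exact ⟨by linarith [neg_abs_le s], by linarith [le_abs_self s]⟩
  have h2 := (hγ (‖t‖₊ + 2) t (by
    push_cast
    simp only [Real.norm_eq_abs]
    exact ⟨by linarith [neg_abs_le t], by linarith [le_abs_self t]⟩)).congr_of_eventuallyEq hval
  have h3 := hval.self_of_nhds
  simpa only [h3] using h2

theorem exists_winfreeSol (N : ℕ) (ω : Fin N → ℝ) (κ : ℝ) (θ0 : Fin N → ℝ) :
    ∃ θ : Fin N → ℝ → ℝ, IsWinfreeSol N ω κ θ0 θ := by
  let v : (Fin N → ℝ) → Fin N → ℝ := fun x i =>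
    ω i - κ / (N : ℝ) * (∑ j, (1 + Real.cos (x j))) * Real.sin (x i)
  have hS : ∀ x : Fin N → ℝ, |∑ j, (1 + Real.cos (x j))| ≤ 2 * N := by
    intro x
    refine (Finset.abs_sum_le_sum_abs _ _).trans ?_
    calc ∑ j, |1 + Real.cos (x j)| ≤ ∑ _j : Fin N, (2 : ℝ) := by
          gcongr with j
          rw [abs_le]
          constructor <;> linarith [Real.cos_le_one (x j), Real.neg_one_le_cos (x j)]
      _ = 2 * N := by simp [mul_comm]
  have hd : ∀ x y : Fin N → ℝ, |∑ j, (1 + Real.cos (x j)) - ∑ j, (1 + Real.cos (y j))|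
      ≤ N * ‖x - y‖ := by
    intro x y
    rw [← Finset.sum_sub_distrib]
    refine (Finset.abs_sum_le_sum_abs _ _).trans ?_
    calc ∑ j, |1 + Real.cos (x j) - (1 + Real.cos (y j))| ≤ ∑ _j : Fin N, ‖x - y‖ := by
          gcongr with j
          rw [add_sub_add_left_eq_sub]
          exact (Real.abs_cos_sub_cos_le _ _).trans (norm_le_pi_norm (x - y) j)
      _ = N * ‖x - y‖ := by simp
  have hK : LipschitzWith (‖κ / N‖₊ * (3 * N)) v := by
    refine LipschitzWith.of_dist_le_mul fun x y => ?_
    rw [dist_eq_norm, dist_eq_norm]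
    refine (pi_norm_le_iff_of_nonneg (by positivity)).2 fun i => ?_
    have e : (v x - v y) i = -(κ / N) * (((∑ j, (1 + Real.cos (x j)) -
        ∑ j, (1 + Real.cos (y j))) * Real.sin (x i)) +
        (∑ j, (1 + Real.cos (y j))) * (Real.sin (x i) - Real.sin (y i))) := by
      simp only [v, Pi.sub_apply]; ring
    rw [e, norm_mul, norm_neg]
    push_cast
    rw [mul_assoc]
    refine mul_le_mul_of_nonneg_left ?_ (norm_nonneg _)
    refine (norm_add_le _ _).trans ?_
    simp only [norm_mul, Real.norm_eq_abs]
    have h1 : |∑ j, (1 + Real.cos (x j)) - ∑ j, (1 + Real.cos (y j))| * |Real.sin (x i)| ≤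
        (N * ‖x - y‖) * 1 :=
      mul_le_mul (hd x y) (Real.abs_sin_le_one _) (abs_nonneg _) (by positivity)
    have h2 : |∑ j, (1 + Real.cos (y j))| * |Real.sin (x i) - Real.sin (y i)| ≤
        (2 * N) * ‖x - y‖ :=
      mul_le_mul (hS y) ((Real.abs_sin_sub_sin_le _ _).trans (norm_le_pi_norm (x - y) i))
        (abs_nonneg _) (by positivity)
    linarith
  have hL : ∀ x, ‖v x‖ ≤ (‖ω‖₊ + ‖κ / N‖₊ * (2 * N) : NNReal) := by
    intro x
    refine (pi_norm_le_iff_of_nonneg (by positivity)).2 fun i => ?_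
    push_cast
    refine (norm_sub_le _ _).trans (add_le_add (norm_le_pi_norm ω i) ?_)
    rw [norm_mul, norm_mul, mul_assoc]
    refine mul_le_mul_of_nonneg_left ?_ (norm_nonneg _)
    have := mul_le_mul (hS x) (Real.abs_sin_le_one (x i)) (abs_nonneg _) (by positivity)
    simpa using this
  obtain ⟨γ, h0, hγ⟩ := exists_global_solution hK hL θ0
  exact ⟨fun i t => γ t i, fun i => by simp [h0], fun i t _ => hasDerivAt_pi.1 (hγ t) i⟩

/-! ### Barriers and trapped phases -/

open Set in
/-- If `f' > 0` whenever `f = b`, then `f` never falls below `b` once it is above it. -/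
theorem le_of_barrier {f f' : ℝ → ℝ} {s T b : ℝ} (hf : ∀ t ∈ Icc s T, HasDerivAt f (f' t) t)
    (h0 : b ≤ f s) (hb : ∀ t ∈ Ico s T, f t = b → 0 < f' t) : ∀ t ∈ Icc s T, b ≤ f t :=
  image_le_of_deriv_right_lt_deriv_boundary' (f := fun _ => b) (f' := fun _ => 0)
    continuousOn_const (fun _ _ => hasDerivWithinAt_const _ _ _) h0
    (HasDerivAt.continuousOn hf)
    (fun t ht => (hf t (Ico_subset_Icc_self ht)).hasDerivWithinAt)
    (fun t ht h => hb t ht h.symm)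

open Set in
theorem oscLt2Pi_of_bounds {f : ℝ → ℝ} {l u : ℝ} (h : ∀ t, 0 ≤ t → l ≤ f t ∧ f t ≤ u)
    (hlu : u - l < 2 * Real.pi) : OscLt2Pi f := by
  have hu : ∀ y ∈ f '' Ici 0, y ≤ u := by rintro _ ⟨t, ht, rfl⟩; exact (h t ht).2
  have hl : ∀ y ∈ f '' Ici 0, l ≤ y := by rintro _ ⟨t, ht, rfl⟩; exact (h t ht).1
  have hne : (f '' Ici 0).Nonempty := ⟨f 0, 0, by simp, rfl⟩
  exact ⟨⟨u, hu⟩, ⟨l, hl⟩, by linarith [csSup_le hne hu, le_csInf hne hl]⟩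

open Set in
/-- A phase that moves down through every point where `sin = 1` and up through every point where
`sin = -1` oscillates by less than `2π`: it can leave `(c + π/2, c + 3π/2)` through one endpoint
only, after which it stays in the adjacent interval of length `π` (on which `cos ≥ 0`). The shift
`c` is a multiple of `2π`, as encoded by `hc`. -/
theorem oscLt2Pi_of_trap {f f' : ℝ → ℝ} {c : ℝ} (hf : ∀ t, 0 ≤ t → HasDerivAt f (f' t) t)
    (hc : ∀ x, Real.sin (x + c) = Real.sin x)
    (hup : ∀ t, 0 ≤ t → Real.sin (f t) = 1 → f' t < 0)
    (hdn : ∀ t, 0 ≤ t → Real.sin (f t) = -1 → 0 < f' t)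
    (h0 : c - Real.pi / 2 ≤ f 0) (h0' : f 0 ≤ c + 3 * Real.pi / 2) : OscLt2Pi f := by
  have hpi := Real.pi_pos
  -- Once `f` is above a point where `sin = -1`, it stays above it.
  have lower : ∀ b, Real.sin b = -1 → ∀ s, 0 ≤ s → b ≤ f s → ∀ t, s ≤ t → b ≤ f t := by
    intro b hb s hs hbs t hst
    exact le_of_barrier (fun u hu => hf u (hs.trans hu.1)) hbs
      (fun u hu h => hdn u (hs.trans hu.1) (h ▸ hb)) t ⟨hst, le_rfl⟩
  -- Once `f` is below a point where `sin = 1`, it stays below it.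
  have upper : ∀ b, Real.sin b = 1 → ∀ s, 0 ≤ s → f s ≤ b → ∀ t, s ≤ t → f t ≤ b := by
    intro b hb s hs hbs t hst
    have := le_of_barrier (f := fun t => -f t) (f' := fun t => -f' t) (b := -b)
      (fun u hu => (hf u (hs.trans hu.1)).neg) (neg_le_neg hbs)
      (fun u hu h => neg_pos.2 (hup u (hs.trans hu.1) ((neg_injective h) ▸ hb))) t ⟨hst, le_rfl⟩
    linarith
  have s1 : Real.sin (c - Real.pi / 2) = -1 := by
    rw [show c - Real.pi / 2 = -(Real.pi / 2) + c by ring, hc, Real.sin_neg, Real.sin_pi_div_two]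
  have s2 : Real.sin (c + Real.pi / 2) = 1 := by
    rw [add_comm, hc, Real.sin_pi_div_two]
  have s3 : Real.sin (c + 3 * Real.pi / 2) = -1 := by
    rw [← s1, ← Real.sin_add_two_pi (c - Real.pi / 2)]; ring_nf
  have s4 : Real.sin (c + 5 * Real.pi / 2) = 1 := by
    rw [← s2, ← Real.sin_add_two_pi (c + Real.pi / 2)]; ring_nf
  have hcont : ∀ s, ContinuousOn f (Icc 0 s) := fun s =>
    HasDerivAt.continuousOn fun t ht => hf t ht.1
  have hL := lower _ s1 0 le_rfl h0
  have hU := upper _ s4 0 le_rfl (h0'.trans (by linarith))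
  by_cases hA : ∃ s, 0 ≤ s ∧ f s ≤ c + Real.pi / 2
  · obtain ⟨s, hs, hfs⟩ := hA
    have hU2 := upper _ s2 s hs hfs
    obtain ⟨m, hm, hmax⟩ := isCompact_Icc.exists_isMaxOn (nonempty_Icc.2 hs) (hcont s)
    have hm' : f m < c + 3 * Real.pi / 2 := by
      by_contra! h
      linarith [lower _ s3 m hm.1 h s hm.2]
    refine oscLt2Pi_of_bounds (l := c - Real.pi / 2) (u := max (f m) (c + Real.pi / 2))
      (fun t ht => ⟨hL t ht, ?_⟩) ?_
    · rcases le_total t s with h | h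
      · exact le_max_of_le_left (hmax ⟨ht, h⟩)
      · exact le_max_of_le_right (hU2 t h)
    · have : max (f m) (c + Real.pi / 2) < c + 3 * Real.pi / 2 := max_lt hm' (by linarith)
      linarith
  · push Not at hA
    by_cases hB : ∃ s, 0 ≤ s ∧ c + 3 * Real.pi / 2 ≤ f s
    · obtain ⟨s, hs, hfs⟩ := hB
      have hL2 := lower _ s3 s hs hfs
      obtain ⟨m, hm, hmin⟩ := isCompact_Icc.exists_isMinOn (nonempty_Icc.2 hs) (hcont s)
      have hm' := hA m hm.1
      refine oscLt2Pi_of_bounds (l := min (f m) (c + 3 * Real.pi / 2)) (u := c + 5 * Real.pi / 2)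
        (fun t ht => ⟨?_, hU t ht⟩) ?_
      · rcases le_total t s with h | h
        · exact min_le_of_left_le (hmin ⟨ht, h⟩)
        · exact min_le_of_right_le (hL2 t h)
      · have : c + Real.pi / 2 < min (f m) (c + 3 * Real.pi / 2) := lt_min hm' (by linarith)
        linarith
    · push Not at hB
      exact oscLt2Pi_of_bounds (fun t ht => ⟨(hA t ht).le, (hB t ht).le⟩) (by linarith)

/-! ### Lower bound for the order parameter -/

open Set in
/-- While the order parameter `R` is at least `μ`, a single oscillator can lose at most `δ` of its
contribution `x = 1 + cos f`, for any `δ ∈ (ε² / μ², 1]`. Indeed `x' = sin f * (κ R sin f - a)` is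
positive when `|sin f| > ε / μ`, in particular when `δ ≤ x ≤ 2 - δ`. -/
theorem one_add_cos_ge {f R : ℝ → ℝ} {a κ μ ε δ T : ℝ} (hκ : 0 < κ) (hμ : 0 < μ) (hε : 0 ≤ ε)
    (ha : |a| ≤ κ * ε) (hδ : ε ^ 2 / μ ^ 2 < δ) (hδ1 : δ ≤ 1)
    (hR : ∀ t ∈ Ico 0 T, μ ≤ R t)
    (hf : ∀ t ∈ Icc 0 T, HasDerivAt f (a - κ * R t * Real.sin (f t)) t) :
    ∀ t ∈ Icc 0 T, 1 + Real.cos (f 0) - δ ≤ 1 + Real.cos (f t) := by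
  intro t ht
  by_cases hs : 1 + Real.cos (f 0) < δ
  · linarith [Real.neg_one_le_cos (f t)]
  push Not at hs
  have hδ0 : 0 < δ := lt_of_le_of_lt (by positivity) hδ
  have key := le_of_barrier (f := fun t => 1 + Real.cos (f t))
    (b := min (1 + Real.cos (f 0)) (2 - δ)) (fun u hu => ((hf u hu).cos.const_add 1))
    (min_le_left _ _) (fun u hu h => ?_) t ht
  · have hx := Real.cos_le_one (f 0)
    refine le_trans ?_ key
    exact le_min (by linarith) (by linarith)
  · -- On the barrier `x = 1 + cos` lies in `[δ, 2 - δ]`, hence `sin² = x (2 - x) > ε² / μ²`.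
    set x := 1 + Real.cos (f u) with hx
    have h1 : δ ≤ x := by rw [h]; exact le_min hs (by linarith)
    have h2 : x ≤ 2 - δ := by rw [h]; exact min_le_right _ _
    have hsin : Real.sin (f u) ^ 2 = x * (2 - x) := by
      rw [Real.sin_sq, hx]; ring
    have h3 : ε ^ 2 < μ ^ 2 * |Real.sin (f u)| ^ 2 := by
      rw [sq_abs, hsin]
      rw [div_lt_iff₀ (by positivity)] at hδ
      have : δ ≤ x * (2 - x) := by nlinarith
      nlinarith [sq_nonneg μ]
    have h4 : ε < μ * |Real.sin (f u)| := by
      rw [← mul_pow] at h3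
      exact lt_of_pow_lt_pow_left₀ 2 (by positivity) h3
    have h5 : 0 < |Real.sin (f u)| := by
      by_contra! h6
      nlinarith [abs_nonneg (Real.sin (f u))]
    have h6 : ε < R u * |Real.sin (f u)| :=
      h4.trans_le (mul_le_mul_of_nonneg_right (hR u hu) h5.le)
    have h7 : a * Real.sin (f u) ≤ κ * ε * |Real.sin (f u)| := by
      refine (le_abs_self _).trans ?_
      rw [abs_mul]
      exact mul_le_mul_of_nonneg_right ha h5.le
    have h8 : -Real.sin (f u) * (a - κ * R u * Real.sin (f u)) =
        κ * R u * |Real.sin (f u)| ^ 2 - a * Real.sin (f u) := by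
      rw [sq_abs]; ring
    rw [h8]
    have h9 : 0 < κ * |Real.sin (f u)| * (R u * |Real.sin (f u)| - ε) :=
      mul_pos (mul_pos hκ h5) (by linarith)
    linarith [h9]

open Set in
/-- Bootstrap: if `R(0) ≥ 2μ` with `ε² < μ³`, then `R > μ` for all time, because as long as `R ≥ μ`
it has lost at most some `δ < μ` since time `0`. -/
theorem orderParam_gt {N : ℕ} (hN : 1 ≤ N) {ω : Fin N → ℝ} {κ ε μ : ℝ} (hκ : 0 < κ)
    (hε : 0 ≤ ε) (hω : ∀ i, |ω i| ≤ κ * ε) (hμ : 0 < μ) (hμ1 : μ ≤ 1) (hεμ : ε ^ 2 < μ ^ 3)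
    {θ0 : Fin N → ℝ} {θ : Fin N → ℝ → ℝ} (hθ : IsWinfreeSol N ω κ θ0 θ)
    (h0 : 2 * μ ≤ orderParam N θ 0) : ∀ t, 0 ≤ t → μ < orderParam N θ t := by
  have hN' : (0 : ℝ) < N := by exact_mod_cast hN
  have hθ' : ∀ i t, 0 ≤ t →
      HasDerivAt (θ i) (ω i - κ * orderParam N θ t * Real.sin (θ i t)) t := by
    intro i t ht
    convert hθ.2 i t ht using 2
    unfold orderParam; ring
  obtain ⟨δ, hδ, hδμ⟩ : ∃ δ, ε ^ 2 / μ ^ 2 < δ ∧ δ < μ := by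
    apply exists_between
    rw [div_lt_iff₀ (by positivity)]
    linarith [pow_succ μ 2]
  have hcont : ContinuousOn (orderParam N θ) (Ici 0) := by
    unfold orderParam
    refine continuousOn_const.mul (continuousOn_finsetSum _ fun j _ => continuousOn_const.add ?_)
    exact Real.continuous_cos.comp_continuousOn (HasDerivAt.continuousOn fun t ht => hθ' j t ht)
  -- As long as the order parameter is at least `μ`, it is at least `2μ - δ > μ`.
  have step : ∀ T, 0 ≤ T → (∀ t ∈ Ico 0 T, μ ≤ orderParam N θ t) → μ < orderParam N θ T := by
    intro T hT h
    have h1 : ∀ j, 1 + Real.cos (θ j 0) - δ ≤ 1 + Real.cos (θ j T) := fun j =>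
      one_add_cos_ge hκ hμ hε (hω j) hδ (by linarith) h (fun t ht => hθ' j t ht.1) T ⟨hT, le_rfl⟩
    have h2 : orderParam N θ 0 - δ ≤ orderParam N θ T := by
      have h3 : ∑ j, (1 + Real.cos (θ j 0) - δ) ≤ ∑ j, (1 + Real.cos (θ j T)) :=
        Finset.sum_le_sum fun j _ => h1 j
      rw [Finset.sum_sub_distrib, Finset.sum_const, Finset.card_univ, Fintype.card_fin,
        nsmul_eq_mul] at h3
      have h4 := mul_le_mul_of_nonneg_left h3 (inv_nonneg.2 hN'.le)
      rw [mul_sub, inv_mul_cancel_left₀ hN'.ne'] at h4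
      exact h4
    linarith
  by_contra! hcon
  obtain ⟨t1, ht1, hbad⟩ := hcon
  -- The first time at which the order parameter is at most `μ`.
  let B : Set ℝ := {t | t ∈ Ici (0 : ℝ) ∧ orderParam N θ t ≤ μ}
  have hBc : IsClosed B := hcont.preimage_isClosed_of_isClosed isClosed_Ici isClosed_Iic
  have hBb : BddBelow B := ⟨0, fun t ht => ht.1⟩
  have hmem : sInf B ∈ B := hBc.csInf_mem ⟨t1, ht1, hbad⟩ hBb
  refine absurd (step (sInf B) hmem.1 fun t ht => ?_) (not_lt.2 hmem.2)
  by_contra! h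
  exact absurd (csInf_le hBb ⟨ht.1, h.le⟩) (not_le.2 ht.2)

/-- Since `R > μ > ε`, the coupling dominates the intrinsic frequency wherever `|sin θᵢ| = 1`, so
every phase is trapped. -/
theorem oscLt2Pi_of_order {N : ℕ} (hN : 1 ≤ N) {ω : Fin N → ℝ} {κ ε μ : ℝ} (hκ : 0 < κ)
    (hε : 0 ≤ ε) (hω : ∀ i, |ω i| ≤ κ * ε) (hμ : 0 < μ) (hμ1 : μ ≤ 1) (hεμ : ε ^ 2 < μ ^ 3)
    {θ0 : Fin N → ℝ} {θ : Fin N → ℝ → ℝ} (hθ : IsWinfreeSol N ω κ θ0 θ)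
    (h0 : 2 * μ ≤ orderParam N θ 0) (hbox : ∀ i, θ0 i ∈ Set.Icc (-Real.pi) Real.pi) :
    ∀ i, OscLt2Pi (θ i) := by
  intro i
  have hR := orderParam_gt hN hκ hε hω hμ hμ1 hεμ hθ h0
  have hεμ' : ε < μ := by
    refine lt_of_pow_lt_pow_left₀ 2 hμ.le (hεμ.trans_le ?_)
    exact pow_le_pow_of_le_one hμ.le hμ1 (by norm_num)
  have hd : ∀ t, 0 ≤ t →
      HasDerivAt (θ i) (ω i - κ * orderParam N θ t * Real.sin (θ i t)) t := by
    intro t ht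
    convert hθ.2 i t ht using 2
    unfold orderParam; ring
  have hlt : ∀ t, 0 ≤ t → |ω i| < κ * orderParam N θ t := fun t ht =>
    (hω i).trans_lt (mul_lt_mul_of_pos_left (hεμ'.trans (hR t ht)) hκ)
  have hup : ∀ t, 0 ≤ t → Real.sin (θ i t) = 1 →
      ω i - κ * orderParam N θ t * Real.sin (θ i t) < 0 := by
    intro t ht h
    rw [h]
    linarith [hlt t ht, le_abs_self (ω i)]
  have hdn : ∀ t, 0 ≤ t → Real.sin (θ i t) = -1 →
      0 < ω i - κ * orderParam N θ t * Real.sin (θ i t) := by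
    intro t ht h
    rw [h]
    linarith [hlt t ht, neg_abs_le (ω i)]
  have hi := hbox i
  rw [← hθ.1 i] at hi
  have hpi := Real.pi_pos
  rcases le_total (-(Real.pi / 2)) (θ i 0) with h | h
  · exact oscLt2Pi_of_trap (c := 0) hd (by simp) hup hdn (by linarith) (by linarith [hi.2])
  · exact oscLt2Pi_of_trap (c := -(2 * Real.pi)) hd
      (fun x => by rw [← sub_eq_add_neg, Real.sin_sub_two_pi]) hup hdn
      (by linarith [hi.1]) (by linarith)

/-! ### Volume of initial data with small order parameter -/

open intervalIntegral in
/-- One-dimensional exponential moment for the Chernoff bound, obtained by comparison with a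
Gaussian through `1 - cos x ≥ 2 x² / π²`. -/
theorem integral_exp_bound {r : ℝ} (hr : 0 < r) :
    ∫ x in Set.Icc (-Real.pi) Real.pi, Real.exp (1 / 2 - (1 + Real.cos x) / (2 * r)) ≤
      Real.pi * Real.sqrt (Real.pi * Real.exp 1 * r) := by
  have hpi := Real.pi_pos
  set g : ℝ → ℝ := fun x => Real.exp (1 / 2 - (1 + Real.cos x) / (2 * r)) with hg
  have hper : Function.Periodic g (2 * Real.pi) := fun x => by simp [hg]
  have hcont : Continuous fun x => g (x + Real.pi) := by fun_prop
  -- By periodicity the minimum of `1 + cos` can be moved from `±π` to `0`.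
  have h1 : ∫ x in Set.Icc (-Real.pi) Real.pi, g x =
      ∫ x in (-Real.pi)..Real.pi, g (x + Real.pi) := by
    rw [integral_Icc_eq_integral_Ioc, ← integral_of_le (by linarith), integral_comp_add_right]
    have := hper.intervalIntegral_add_eq (-Real.pi) 0
    convert this using 2 <;> ring
  have hb : 0 < 1 / (Real.pi ^ 2 * r) := by positivity
  have hgi := (integrable_exp_neg_mul_sq hb).const_mul (Real.exp (1 / 2))
  rw [h1, integral_of_le (by linarith), ← integral_Icc_eq_integral_Ioc]
  calc ∫ x in Set.Icc (-Real.pi) Real.pi, g (x + Real.pi)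
      ≤ ∫ x in Set.Icc (-Real.pi) Real.pi,
          Real.exp (1 / 2) * Real.exp (-(1 / (Real.pi ^ 2 * r)) * x ^ 2) := by
        refine setIntegral_mono_on hcont.continuousOn.integrableOn_Icc hgi.integrableOn
          measurableSet_Icc fun x hx => ?_
        rw [hg, ← Real.exp_add]
        refine Real.exp_le_exp.2 ?_
        simp only [Real.cos_add_pi]
        have := Real.cos_le_one_sub_mul_cos_sq (abs_le.2 hx)
        have h2 : 2 / Real.pi ^ 2 * x ^ 2 / (2 * r) ≤ (1 + -Real.cos x) / (2 * r) := by
          gcongr; linarith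
        have h3 : 2 / Real.pi ^ 2 * x ^ 2 / (2 * r) = 1 / (Real.pi ^ 2 * r) * x ^ 2 := by
          field_simp
        linarith
    _ ≤ ∫ x, Real.exp (1 / 2) * Real.exp (-(1 / (Real.pi ^ 2 * r)) * x ^ 2) :=
        setIntegral_le_integral hgi (Filter.Eventually.of_forall fun x => by positivity)
    _ = Real.pi * Real.sqrt (Real.pi * Real.exp 1 * r) := by
        rw [MeasureTheory.integral_const_mul, integral_gaussian]
        have : Real.exp (1 / 2) = Real.sqrt (Real.exp 1) := by
          rw [Real.sqrt_eq_rpow, ← Real.exp_mul]; simp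
        rw [this, ← Real.sqrt_mul (Real.exp_pos 1).le,
          ← Real.sqrt_sq hpi.le, ← Real.sqrt_mul (sq_nonneg _), Real.sqrt_sq hpi.le]
        congr 1
        field_simp

/-- Chernoff bound for the volume of the initial data in the box whose order parameter is at
most `r`. -/
theorem volume_small_order_le (N : ℕ) {r : ℝ} (hr : 0 < r) :
    (volume.restrict (Set.univ.pi fun _ : Fin N => Set.Icc (-Real.pi) Real.pi))
      {x : Fin N → ℝ | ∑ j, (1 + Real.cos (x j)) ≤ r * N} ≤
      ENNReal.ofReal ((Real.pi * Real.sqrt (Real.pi * Real.exp 1 * r)) ^ N) := by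
  rw [volume_pi, Measure.restrict_pi_pi]
  set μ₁ : Measure ℝ := volume.restrict (Set.Icc (-Real.pi) Real.pi) with hμ₁
  set g : ℝ → ℝ := fun x => Real.exp (1 / 2 - (1 + Real.cos x) / (2 * r)) with hg
  have hgi : Integrable g μ₁ := by
    have : Continuous g := by fun_prop
    exact this.continuousOn.integrableOn_Icc
  have hint : Integrable (fun x : Fin N → ℝ => ∏ j, g (x j)) (Measure.pi fun _ => μ₁) :=
    Integrable.fintype_prod (f := fun _ => g) fun _ => hgi
  have hnn : ∀ x : Fin N → ℝ, 0 ≤ ∏ j, g (x j) := fun x =>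
    Finset.prod_nonneg fun j _ => (Real.exp_pos _).le
  have hm := mul_meas_ge_le_integral_of_nonneg (Filter.Eventually.of_forall hnn) hint 1
  rw [one_mul, integral_fintype_prod_eq_pow (ι := Fin N) g, Fintype.card_fin] at hm
  have hsub : {x : Fin N → ℝ | ∑ j, (1 + Real.cos (x j)) ≤ r * N} ⊆
      {x | 1 ≤ ∏ j, g (x j)} := by
    intro x hx
    change ∑ j, (1 + Real.cos (x j)) ≤ r * N at hx
    change 1 ≤ ∏ j, g (x j)
    rw [hg, ← Real.exp_sum]
    refine Real.one_le_exp ?_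
    have h1 : ∑ j, (1 + Real.cos (x j)) / (2 * r) ≤ N / 2 := by
      rw [← Finset.sum_div, div_le_iff₀ (by positivity)]
      linarith
    simp only [Finset.sum_sub_distrib, Finset.sum_const, Finset.card_univ, Fintype.card_fin,
      nsmul_eq_mul]
    linarith
  refine (measure_mono hsub).trans ?_
  rw [← ofReal_measureReal]
  refine ENNReal.ofReal_le_ofReal (hm.trans ?_)
  exact pow_le_pow_left₀ (integral_nonneg fun x => (Real.exp_pos _).le) (integral_exp_bound hr) N

theorem volume_zero_order {N : ℕ} (hN : 1 ≤ N) :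
    (volume.restrict (Set.univ.pi fun _ : Fin N => Set.Icc (-Real.pi) Real.pi))
      {x : Fin N → ℝ | ∑ j, (1 + Real.cos (x j)) ≤ 0} = 0 := by
  -- The volume is at most `(π √(π e r)) ^ N` for every `r > 0`, and this tends to `0`.
  have hlim : Filter.Tendsto
      (fun r : ℝ => ENNReal.ofReal ((Real.pi * Real.sqrt (Real.pi * Real.exp 1 * r)) ^ N))
      (nhdsWithin 0 (Set.Ioi 0)) (nhds 0) := by
    have hc : Continuous fun r : ℝ =>
        ENNReal.ofReal ((Real.pi * Real.sqrt (Real.pi * Real.exp 1 * r)) ^ N) :=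
      ENNReal.continuous_ofReal.comp (by fun_prop)
    have := hc.tendsto 0
    simp only [mul_zero, Real.sqrt_zero, zero_pow (by omega : N ≠ 0), ENNReal.ofReal_zero] at this
    exact this.mono_left nhdsWithin_le_nhds
  refine le_antisymm (ge_of_tendsto hlim ?_) zero_le
  filter_upwards [self_mem_nhdsWithin] with r hr
  refine (measure_mono fun x hx => ?_).trans (volume_small_order_le N hr)
  exact le_trans hx (mul_nonneg (Set.mem_Ioi.1 hr).le (Nat.cast_nonneg N))

/-! ### Matching the two estimates -/

theorem stmt2 (N : ℕ) (hN : 1 ≤ N) (ω : Fin N → ℝ) (κ : ℝ) (Ωn : ℝ)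
    (hΩn : IsGreatest (Set.range fun i => |ω i|) Ωn)
    (hκpos : 0 < κ)
    (hκ : (Real.pi * Real.exp 1 / 2) ^ ((3:ℝ)/2) * Ωn < κ) :
    ENNReal.ofReal
        (1 - (Real.sqrt (Real.pi * Real.exp 1 / 2) * (Ωn / κ) ^ ((1:ℝ)/3)) ^ N) ≤
      normBox N {θ0 : Fin N → ℝ | ∃ θ : Fin N → ℝ → ℝ, IsWinfreeSol N ω κ θ0 θ ∧
        ∀ i, OscLt2Pi (θ i)} := by
  have hpi := Real.pi_pos
  have hN' : (0 : ℝ) < N := by exact_mod_cast hN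
  have hΩ : ∀ i, |ω i| ≤ Ωn := fun i => hΩn.2 ⟨i, rfl⟩
  have hΩ0 : 0 ≤ Ωn := (abs_nonneg _).trans (hΩ ⟨0, hN⟩)
  set ε := Ωn / κ with hε
  have hε0 : 0 ≤ ε := by positivity
  have hω : ∀ i, |ω i| ≤ κ * ε := fun i => by
    rw [hε, mul_div_cancel₀ _ hκpos.ne']; exact hΩ i
  -- `ρ ^ 2 = ε ^ (2/3)` is half of the critical value of the order parameter.
  set ρ := ε ^ ((1 : ℝ) / 3) with hρ
  have hρ0 : 0 ≤ ρ := by positivity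
  have hρ3 : ρ ^ 3 = ε := by
    rw [hρ, ← Real.rpow_natCast, ← Real.rpow_mul hε0]; norm_num
  set q := Real.sqrt (Real.pi * Real.exp 1 / 2) * ρ with hq
  have hq0 : 0 ≤ q := by positivity
  set box : Set (Fin N → ℝ) := Set.univ.pi fun _ : Fin N => Set.Icc (-Real.pi) Real.pi with hbox
  set A : Set (Fin N → ℝ) := {θ0 : Fin N → ℝ | ∃ θ : Fin N → ℝ → ℝ, IsWinfreeSol N ω κ θ0 θ ∧
        ∀ i, OscLt2Pi (θ i)} with hA
  set B : Set (Fin N → ℝ) := {x | ∑ j, (1 + Real.cos (x j)) ≤ 2 * ρ ^ 2 * N} with hB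
  have hvolB : volume.restrict box B ≤ ENNReal.ofReal ((2 * Real.pi * q) ^ N) := by
    -- The Chernoff bound needs a positive threshold, so `ε = 0` is treated separately.
    rcases hρ0.eq_or_lt with h | h
    · rw [hB, ← h]
      simp only [ne_eq, OfNat.ofNat_ne_zero, not_false_eq_true, zero_pow, mul_zero, zero_mul]
      rw [volume_zero_order hN]
      exact zero_le
    · refine (volume_small_order_le N (r := 2 * ρ ^ 2) (by positivity)).trans_eq ?_
      congr 2
      have : Real.pi * Real.exp 1 * (2 * ρ ^ 2) = (2 * ρ) ^ 2 * (Real.pi * Real.exp 1 / 2) := by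
        ring
      rw [this, Real.sqrt_mul (sq_nonneg _), Real.sqrt_sq (by positivity), hq]
      ring
  have hvol : volume box = ENNReal.ofReal ((2 * Real.pi) ^ N) := by
    rw [hbox, volume_pi_pi]
    simp only [Real.volume_Icc, Finset.prod_const, Finset.card_univ, Fintype.card_fin]
    rw [ENNReal.ofReal_pow (by positivity)]
    congr 2; ring
  have hsub : box ⊆ (A ∩ box) ∪ (B ∩ box) := by
    intro x hx
    by_cases hxB : x ∈ B
    · exact Or.inr ⟨hxB, hx⟩
    refine Or.inl ⟨?_, hx⟩
    obtain ⟨θ, hθ⟩ := exists_winfreeSol N ω κ x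
    have h0 : orderParam N θ 0 = (N : ℝ)⁻¹ * ∑ j, (1 + Real.cos (x j)) := by
      simp only [orderParam, hθ.1]
    have hlt : 2 * ρ ^ 2 < orderParam N θ 0 := by
      rw [h0, inv_mul_eq_div, lt_div_iff₀ hN']
      exact not_le.1 hxB
    have hle : orderParam N θ 0 ≤ 2 := by
      rw [h0, inv_mul_eq_div, div_le_iff₀ hN']
      calc ∑ j, (1 + Real.cos (x j)) ≤ ∑ _j : Fin N, (2 : ℝ) :=
            Finset.sum_le_sum fun j _ => by linarith [Real.cos_le_one (x j)]
        _ = 2 * N := by simp [mul_comm]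
    refine ⟨θ, hθ, oscLt2Pi_of_order hN hκpos hε0 hω (μ := orderParam N θ 0 / 2)
      (by linarith [sq_nonneg ρ]) (by linarith) ?_ hθ (by linarith)
      (fun i => hx i trivial)⟩
    calc ε ^ 2 = (ρ ^ 2) ^ 3 := by rw [← hρ3]; ring
      _ < (orderParam N θ 0 / 2) ^ 3 :=
        pow_lt_pow_left₀ (by linarith) (sq_nonneg ρ) (by norm_num)
  have hbm : MeasurableSet box := MeasurableSet.univ_pi fun _ => measurableSet_Icc
  have hmain : ENNReal.ofReal ((2 * Real.pi) ^ N) ≤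
      volume.restrict box A + ENNReal.ofReal ((2 * Real.pi * q) ^ N) := by
    refine le_trans ?_ (add_le_add_right hvolB _)
    rw [← hvol, Measure.restrict_apply' hbm, Measure.restrict_apply' hbm]
    exact (measure_mono hsub).trans (measure_union_le _ _)
  have hc : ENNReal.ofReal (1 - q ^ N) = (ENNReal.ofReal ((2 * Real.pi) ^ N))⁻¹ *
      (ENNReal.ofReal ((2 * Real.pi) ^ N) - ENNReal.ofReal ((2 * Real.pi * q) ^ N)) := by
    rw [← ENNReal.ofReal_sub _ (by positivity), ← ENNReal.ofReal_inv_of_pos (by positivity),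
      ← ENNReal.ofReal_mul (by positivity), mul_pow (2 * Real.pi) q]
    congr 1
    field_simp
  rw [hc, normBox, Measure.smul_apply, smul_eq_mul]
  gcongr
  exact tsub_le_iff_right.2 hmain
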